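/- arXiv:1307.4385 — 2 statements merged into one kernel-verified Lean document; each statement's English description precedes it below -/
import Mathlib

section
/- If X is an infinite-dimensional Banach space and finitely many closed balls cover the unit sphere of X, then at least one of the balls contains an antipodal pair (y, −y) of unit vectors. -/
/-!
If closed sets `A i` cover the unit sphere and none contains an antipodal pair, then the odd map
`x ↦ (infDist x (A i) - infDist (-x) (A i))ᵢ`, with one index `i₀` left out, has no zero: a zero
`x` has `x ∈ A i ↔ -x ∈ A i` for `i ≠ i₀`, which forces both `x` and `-x` into `A i₀`. So it
suffices to show the Borsuk–Ulam theorem, that an odd map from the sphere to a space of smaller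
dimension has a zero.

For Borsuk–Ulam, restrict to the boundary of the cross-polytope with vertices `± e 0, …, ± e n`, and
give each of the `n` coordinates of the odd map a sign `s i : E → ZMod 2` with
`s i (-x) = s i x + 1`. Contracting along straight lines to the new vertex `e (k + 1)` builds mod 2
Vietoris–Rips chains `h k`, of arbitrarily small scale, with `∂ (h (k + 1)) = h k + ν (h k)`, where
`ν` is the antipodal action: `h k` and `ν (h k)` are opposite hemispheres of a `k`-sphere. The cup
product of the coboundaries `δ (s i)` for `i < k` is a `ν`-invariant cocycle, and Stokes' formula
with `s k x + s k (-x) = 1` shows by induction that its value on `h k` is `1`. Hence some small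
simplex of `h n` sees a sign change of every coordinate, so all coordinates are small on it, and a
limit of such points is a zero.
-/

/-- Mod 2 chains of ordered simplices with vertices in `E`. A list of `k + 1` points is a
`k`-simplex, possibly degenerate, and the empty list is the generator in degree `-1` of the
augmented complex. -/
abbrev OrderedChain (E : Type*) := List E →₀ ZMod 2

namespace OrderedChain

open Finsupp Set

variable {E : Type*} {A B : Set (List E)}

section Operators

/-- The join of a chain with the vertex `x`. -/
noncomputable def cone (x : E) : OrderedChain E →ₗ[ZMod 2] OrderedChain E :=
  lmapDomain (ZMod 2) (ZMod 2) (List.cons x)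

@[simp]
lemma cone_single (x : E) (l : List E) : cone x (single l 1) = single (x :: l) 1 := by
  simp [cone]

lemma linearMap_ext {M : Type*} [AddCommMonoid M] [Module (ZMod 2) M]
    {f g : OrderedChain E →ₗ[ZMod 2] M} (nil : f (single [] 1) = g (single [] 1))
    (cone : ∀ x c, f c = g c → f (cone x c) = g (cone x c)) : f = g := by
  ext l : 2
  suffices f (single l 1) = g (single l 1) by simpa
  induction l with
  | nil => exact nil
  | cons x l ih => simpa using cone x _ ih

/-- The action of a map of vertices on chains. -/
noncomputable def map (φ : E → E) : OrderedChain E →ₗ[ZMod 2] OrderedChain E :=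
  lmapDomain (ZMod 2) (ZMod 2) (List.map φ)

@[simp]
lemma map_single (φ : E → E) (l : List E) : map φ (single l 1) = single (l.map φ) 1 := by
  simp [map]

@[simp]
lemma map_cone (φ : E → E) (x : E) (c : OrderedChain E) :
    map φ (cone x c) = cone (φ x) (map φ c) := by
  simp [map, cone, ← mapDomain_comp, Function.comp_def]

@[simp]
lemma map_map (φ ψ : E → E) (c : OrderedChain E) : map φ (map ψ c) = map (φ ∘ ψ) c := by
  simp [map, ← mapDomain_comp]

@[simp]
lemma map_id (c : OrderedChain E) : map id c = c := by
  simp [map]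

lemma map_apply_nil (φ : E → E) (c : OrderedChain E) : map φ c [] = c [] := by
  refine LinearMap.congr_fun (f := lapply [] ∘ₗ map φ) (g := lapply []) ?_ c
  ext l
  cases l <;> simp

/-- The augmented boundary, characterised by `∂ [] = 0` and `∂ (x * c) = c + x * ∂ c`. -/
noncomputable def boundary : OrderedChain E →ₗ[ZMod 2] OrderedChain E :=
  linearCombination (ZMod 2) <| List.rec 0 fun x l bl ↦ single l 1 + cone x bl

@[simp]
lemma boundary_nil : boundary (single ([] : List E) 1) = 0 := by
  simp [boundary]

@[simp]
lemma boundary_cone (x : E) (c : OrderedChain E) :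
    boundary (cone x c) = c + cone x (boundary c) := by
  refine LinearMap.congr_fun (f := boundary ∘ₗ cone x)
    (g := LinearMap.id + cone x ∘ₗ boundary) ?_ c
  ext l : 2
  simp [boundary]

@[simp]
lemma boundary_single_cons (x : E) (l : List E) :
    boundary (single (x :: l) 1) = single l 1 + cone x (boundary (single l 1)) := by
  rw [← cone_single, boundary_cone]

@[simp]
lemma boundary_boundary (c : OrderedChain E) : boundary (boundary c) = 0 := by
  refine LinearMap.congr_fun (f := boundary ∘ₗ boundary) (g := 0) (linearMap_ext ?_ ?_) c
  · simp
  · intro x c ih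
    simp_all [ZModModule.add_self]

lemma boundary_map (φ : E → E) (c : OrderedChain E) :
    boundary (map φ c) = map φ (boundary c) := by
  refine LinearMap.congr_fun (f := boundary ∘ₗ map φ) (g := map φ ∘ₗ boundary)
    (linearMap_ext ?_ ?_) c
  · simp
  · intro x c ih
    simp_all

/-- The prism operator, the chain homotopy between the actions of `φ` and `ψ`. On `[x₀, …, xₖ]` it
is the sum of the simplices `[φ x₀, …, φ xᵢ, ψ xᵢ, …, ψ xₖ]`. -/
noncomputable def prism (φ ψ : E → E) : OrderedChain E →ₗ[ZMod 2] OrderedChain E :=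
  linearCombination (ZMod 2) <|
    List.rec 0 fun x l pl ↦ cone (φ x) (single (ψ x :: l.map ψ) 1 + pl)

@[simp]
lemma prism_nil (φ ψ : E → E) : prism φ ψ (single [] 1) = 0 := by
  simp [prism]

@[simp]
lemma prism_cone (φ ψ : E → E) (x : E) (c : OrderedChain E) :
    prism φ ψ (cone x c) = cone (φ x) (cone (ψ x) (map ψ c) + prism φ ψ c) := by
  refine LinearMap.congr_fun (f := prism φ ψ ∘ₗ cone x)
    (g := cone (φ x) ∘ₗ (cone (ψ x) ∘ₗ map ψ + prism φ ψ)) ?_ c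
  ext l : 2
  simp [prism]

lemma boundary_prism (φ ψ : E → E) (c : OrderedChain E) :
    boundary (prism φ ψ c) = map φ c + map ψ c + prism φ ψ (boundary c) := by
  refine LinearMap.congr_fun (f := boundary ∘ₗ prism φ ψ)
    (g := map φ + map ψ + prism φ ψ ∘ₗ boundary) (linearMap_ext ?_ ?_) c
  · simp [ZModModule.add_self]
  · intro x c ih
    simp only [LinearMap.comp_apply, LinearMap.add_apply] at ih ⊢
    simp only [prism_cone, boundary_cone, boundary_map, map_cone, map_add, ih]
    linear_combination (norm := module) ZModModule.add_self (cone (φ x) (map ψ c))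

lemma boundary_sum_prism (φ : ℕ → E → E) (m : ℕ) {z : OrderedChain E} (hz : boundary z = 0) :
    boundary (∑ t ∈ Finset.range m, prism (φ t) (φ (t + 1)) z) = map (φ 0) z + map (φ m) z := by
  simp only [map_sum, boundary_prism, hz, map_zero, add_zero]
  simpa only [ZModModule.sub_eq_add, add_comm] using Finset.sum_range_sub (fun t ↦ map (φ t) z) m

end Operators

section Supported

lemma map_mem_of_mem_supported {M : Type*} [AddCommMonoid M] [Module (ZMod 2) M]
    {p : Submodule (ZMod 2) M} {T : OrderedChain E →ₗ[ZMod 2] M}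
    (hT : ∀ l ∈ A, T (single l 1) ∈ p) {c : OrderedChain E}
    (hc : c ∈ supported (ZMod 2) (ZMod 2) A) : T c ∈ p := by
  rw [supported_eq_span_single] at hc
  refine Submodule.span_le (p := p.comap T).2 ?_ hc
  rintro _ ⟨l, hl, rfl⟩
  exact hT l hl

lemma eq_of_mem_supported {M : Type*} [AddCommMonoid M] [Module (ZMod 2) M]
    {f g : OrderedChain E →ₗ[ZMod 2] M} (hfg : ∀ l ∈ A, f (single l 1) = g (single l 1))
    {c : OrderedChain E} (hc : c ∈ supported (ZMod 2) (ZMod 2) A) : f c = g c := by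
  rw [supported_eq_span_single] at hc
  refine LinearMap.eqOn_span ?_ hc
  rintro _ ⟨l, hl, rfl⟩
  exact hfg l hl

lemma cone_mem_supported {x : E} (hx : ∀ l ∈ A, x :: l ∈ B) {c : OrderedChain E}
    (hc : c ∈ supported (ZMod 2) (ZMod 2) A) : cone x c ∈ supported (ZMod 2) (ZMod 2) B :=
  map_mem_of_mem_supported (fun l hl ↦ by simpa using single_mem_supported _ 1 (hx l hl)) hc

lemma prism_single_mem_supported (φ ψ : E → E) (l : List E) :
    prism φ ψ (single l 1) ∈ supported (ZMod 2) (ZMod 2) {l' | l' ⊆ l.map φ ++ l.map ψ} := by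
  induction l with
  | nil => simp
  | cons x l ih =>
    rw [← cone_single, prism_cone, map_single, cone_single]
    refine cone_mem_supported (A := {l' | l' ⊆ (x :: l).map φ ++ (x :: l).map ψ}) ?_
      (add_mem (single_mem_supported _ 1 ?_) (supported_mono ?_ ih))
    · intro l' hl'
      simp_all
    · simp
    · intro l' hl' y hy
      have := hl' hy
      grind

end Supported

section Rips

variable [PseudoMetricSpace E] {K K' : Set E} {δ ε : ℝ} {c : OrderedChain E}

/-- The simplices of the Vietoris–Rips complex of `K` at scale `ε`. -/
def ripsSimplices (K : Set E) (ε : ℝ) : Set (List E) :=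
  {l | (∀ x ∈ l, x ∈ K) ∧ ∀ x ∈ l, ∀ y ∈ l, dist x y ≤ ε}

/-- The chains of the Vietoris–Rips complex of `K` at scale `ε`. -/
def ripsChains (K : Set E) (ε : ℝ) : Submodule (ZMod 2) (OrderedChain E) :=
  supported (ZMod 2) (ZMod 2) (ripsSimplices K ε)

lemma ripsChains_mono (hK : K ⊆ K') (hδ : δ ≤ ε) : ripsChains K δ ≤ ripsChains K' ε :=
  supported_mono fun _ (hl : _ ∧ _) ↦
    ⟨fun x hx ↦ hK (hl.1 x hx), fun x hx y hy ↦ (hl.2 x hx y hy).trans hδ⟩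

lemma single_mem_ripsChains {l : List E} (hl : l ∈ ripsSimplices K ε) :
    single l 1 ∈ ripsChains K ε :=
  single_mem_supported _ 1 hl

lemma single_mem_ripsChains_of_forall_eq {p : E} (hp : p ∈ K) (hε : 0 ≤ ε) {l : List E}
    (hl : ∀ x ∈ l, x = p) : single l 1 ∈ ripsChains K ε :=
  single_mem_ripsChains ⟨fun x hx ↦ hl x hx ▸ hp, fun x hx y hy ↦ by simpa [hl x hx, hl y hy]⟩

lemma map_mem_ripsChains {φ : E → E} (hφ : MapsTo φ K K')
    (hd : ∀ x ∈ K, ∀ y ∈ K, dist x y ≤ δ → dist (φ x) (φ y) ≤ ε) (hc : c ∈ ripsChains K δ) :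
    map φ c ∈ ripsChains K' ε := by
  refine map_mem_of_mem_supported (fun l hl ↦ ?_) hc
  rw [map_single]
  refine single_mem_ripsChains ⟨?_, ?_⟩
  · simpa using fun x hx ↦ hφ (hl.1 x hx)
  · simpa using fun x hx y hy ↦ hd x (hl.1 x hx) y (hl.1 y hy) (hl.2 x hx y hy)

lemma prism_mem_ripsChains {φ ψ : E → E} (hφ : MapsTo φ K K') (hψ : MapsTo ψ K K')
    (hd : ∀ x ∈ K, ∀ y ∈ K, dist x y ≤ δ →
      dist (φ x) (φ y) ≤ ε ∧ dist (φ x) (ψ y) ≤ ε ∧ dist (ψ x) (ψ y) ≤ ε)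
    (hc : c ∈ ripsChains K δ) : prism φ ψ c ∈ ripsChains K' ε := by
  refine map_mem_of_mem_supported (fun l hl ↦ ?_) hc
  suffices {l' | l' ⊆ l.map φ ++ l.map ψ} ⊆ ripsSimplices K' ε from
    supported_mono this (prism_single_mem_supported φ ψ l)
  refine fun l' hl' ↦ ⟨fun x hx ↦ ?_, fun x hx y hy ↦ ?_⟩
  · have hx' := hl' hx
    simp only [List.mem_append, List.mem_map] at hx'
    obtain ⟨a, ha, rfl⟩ | ⟨a, ha, rfl⟩ := hx'
    exacts [hφ (hl.1 a ha), hψ (hl.1 a ha)]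
  · have hd' (a) (ha : a ∈ l) (b) (hb : b ∈ l) :=
      hd a (hl.1 a ha) b (hl.1 b hb) (hl.2 a ha b hb)
    have hx' := hl' hx
    have hy' := hl' hy
    simp only [List.mem_append, List.mem_map] at hx' hy'
    obtain ⟨a, ha, rfl⟩ | ⟨a, ha, rfl⟩ := hx' <;> obtain ⟨b, hb, rfl⟩ | ⟨b, hb, rfl⟩ := hy'
    · exact (hd' a ha b hb).1
    · exact (hd' a ha b hb).2.1
    · exact dist_comm (ψ a) (φ b) ▸ (hd' b hb a ha).2.1
    · exact (hd' a ha b hb).2.2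

end Rips

section SignCocycle

/-- The cup product of the 0-cochain `s` with the cochain `W`. -/
noncomputable def vertexCup (s : E → ZMod 2) (W : OrderedChain E →ₗ[ZMod 2] ZMod 2) :
    OrderedChain E →ₗ[ZMod 2] ZMod 2 :=
  linearCombination (ZMod 2) fun
    | [] => 0
    | x :: l => s x * W (single (x :: l) 1)

@[simp]
lemma vertexCup_nil (s : E → ZMod 2) (W : OrderedChain E →ₗ[ZMod 2] ZMod 2) :
    vertexCup s W (single [] 1) = 0 := by
  simp [vertexCup]

@[simp]
lemma vertexCup_cone (s : E → ZMod 2) (W : OrderedChain E →ₗ[ZMod 2] ZMod 2) (x : E)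
    (c : OrderedChain E) : vertexCup s W (cone x c) = s x * W (cone x c) := by
  refine LinearMap.congr_fun (f := vertexCup s W ∘ₗ cone x) (g := s x • W ∘ₗ cone x) ?_ c
  ext l
  simp [vertexCup]

lemma vertexCup_boundary_cone_cone (s : E → ZMod 2) {W : OrderedChain E →ₗ[ZMod 2] ZMod 2}
    (hW : ∀ c, W (boundary c) = 0) (x y : E) (c : OrderedChain E) :
    vertexCup s W (boundary (cone x (cone y c))) = (s x + s y) * W (cone y c) := by
  have hface : W (cone x (boundary (cone y c))) = W (cone y c) := by
    have := hW (cone x (cone y c))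
    rwa [boundary_cone, map_add, CharTwo.add_eq_zero, eq_comm] at this
  rw [boundary_cone, map_add, vertexCup_cone, vertexCup_cone, hface]
  ring

/-- The cocycle `δ(sₖ₋₁ ∪ δ(sₖ₋₂ ∪ ⋯ δ(s₀ ∪ 1)))`, where `1` is the 0-cocycle `∂*[]`: it is the cup
product of the coboundaries `δsᵢ` for `i < k`. -/
noncomputable def signCocycle (s : ℕ → E → ZMod 2) : ℕ → OrderedChain E →ₗ[ZMod 2] ZMod 2
  | 0 => lapply [] ∘ₗ boundary
  | k + 1 => vertexCup (s k) (signCocycle s k) ∘ₗ boundary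

variable (s : ℕ → E → ZMod 2) (k : ℕ)

lemma signCocycle_zero_singleton (x : E) : signCocycle s 0 (single [x] 1) = 1 := by
  simp [signCocycle]

lemma signCocycle_succ_apply (c : OrderedChain E) :
    signCocycle s (k + 1) c = vertexCup (s k) (signCocycle s k) (boundary c) :=
  rfl

lemma signCocycle_boundary (c : OrderedChain E) : signCocycle s k (boundary c) = 0 := by
  cases k <;> simp [signCocycle]

@[simp]
lemma signCocycle_nil : signCocycle s k (single [] 1) = 0 := by
  cases k <;> simp [signCocycle]

@[simp]
lemma signCocycle_succ_singleton (x : E) : signCocycle s (k + 1) (single [x] 1) = 0 := by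
  simp [signCocycle]

lemma signCocycle_succ_cons_cons (x y : E) (l : List E) :
    signCocycle s (k + 1) (single (x :: y :: l) 1) =
      (s k x + s k y) * signCocycle s k (single (y :: l) 1) := by
  rw [signCocycle_succ_apply, ← cone_single, ← cone_single,
    vertexCup_boundary_cone_cone _ (signCocycle_boundary s k)]

variable {s k}

lemma exists_ne_of_signCocycle_single_ne_zero {l : List E}
    (hl : signCocycle s k (single l 1) ≠ 0) : ∀ i < k, ∃ x ∈ l, ∃ y ∈ l, s i x ≠ s i y := by
  induction k generalizing l with
  | zero => simp
  | succ k ih =>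
    match l with
    | [] => simp at hl
    | [x] => simp at hl
    | x :: y :: l =>
      rw [signCocycle_succ_cons_cons, mul_ne_zero_iff, ne_eq, CharTwo.add_eq_zero] at hl
      intro i hi
      obtain hi | rfl := Nat.lt_succ_iff_lt_or_eq.mp hi
      · obtain ⟨a, ha, b, hb, hab⟩ := ih hl.2 i hi
        exact ⟨a, List.mem_cons_of_mem x ha, b, List.mem_cons_of_mem x hb, hab⟩
      · exact ⟨x, by simp, y, by simp, hl.1⟩

variable [Neg E] {K : Set E}

lemma signCocycle_single_map_neg (hs : ∀ i < k, ∀ x ∈ K, s i (-x) = s i x + 1) {l : List E}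
    (hl : ∀ x ∈ l, x ∈ K) :
    signCocycle s k (single (l.map Neg.neg) 1) = signCocycle s k (single l 1) := by
  induction k generalizing l with
  | zero => simp [← map_single, signCocycle, boundary_map, map_apply_nil]
  | succ k ih =>
    match l with
    | [] => rfl
    | [x] => simp
    | x :: y :: l =>
      have ih' := ih (fun i hi ↦ hs i (hi.trans k.lt_succ_self))
        (fun z hz ↦ hl z (List.mem_cons_of_mem x hz))
      have hsum : s k (-x) + s k (-y) = s k x + s k y := by
        rw [hs k k.lt_succ_self x (hl x (by simp)), hs k k.lt_succ_self y (hl y (by simp)),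
          add_add_add_comm, CharTwo.add_self_eq_zero, add_zero]
      simp only [List.map_cons] at ih' ⊢
      rw [signCocycle_succ_cons_cons, signCocycle_succ_cons_cons, ih', hsum]

lemma vertexCup_signCocycle_add_map_neg (hs : ∀ i < k + 1, ∀ x ∈ K, s i (-x) = s i x + 1)
    {c : OrderedChain E} (hc : c ∈ supported (ZMod 2) (ZMod 2) {l | ∀ x ∈ l, x ∈ K}) :
    vertexCup (s k) (signCocycle s k) (c + map Neg.neg c) = signCocycle s k c := by
  refine eq_of_mem_supported
    (f := vertexCup (s k) (signCocycle s k) ∘ₗ (LinearMap.id + map Neg.neg)) (fun l hl ↦ ?_) hc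
  have hneg := signCocycle_single_map_neg (fun i hi ↦ hs i (hi.trans k.lt_succ_self)) hl
  match l with
  | [] => simp
  | x :: l =>
    simp only [List.map_cons] at hneg
    simp only [LinearMap.comp_apply, LinearMap.add_apply, LinearMap.id_apply, map_single, map_add,
      List.map_cons]
    rw [← cone_single x, ← cone_single (-x), vertexCup_cone, vertexCup_cone, cone_single,
      cone_single, hneg, hs k k.lt_succ_self x (hl x (by simp)), add_one_mul, ← add_assoc,
      CharTwo.add_self_eq_zero, zero_add]

end SignCocycle

section Contraction

variable [NormedAddCommGroup E] [NormedSpace ℝ E] {K : Set E} {δ ε : ℝ}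

lemma dist_lineMap_lineMap_le_add (p x y : E) {a : ℝ} (ha : a ∈ Icc 0 1) (b : ℝ) :
    dist (AffineMap.lineMap x p a) (AffineMap.lineMap y p b) ≤ dist x y + |a - b| * dist y p := by
  have hdiff : AffineMap.lineMap x p a - AffineMap.lineMap y p b =
      (1 - a) • (x - y) + (a - b) • (p - y) := by
    simp only [AffineMap.lineMap_apply_module]
    module
  have hcontr : (1 - a) * ‖x - y‖ ≤ ‖x - y‖ :=
    mul_le_of_le_one_left (norm_nonneg _) (by linarith [ha.1])
  rw [dist_eq_norm, hdiff, dist_eq_norm, dist_comm, dist_eq_norm]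
  calc ‖(1 - a) • (x - y) + (a - b) • (p - y)‖
      ≤ (1 - a) * ‖x - y‖ + |a - b| * ‖p - y‖ := by
        refine (norm_add_le _ _).trans_eq ?_
        rw [norm_smul, norm_smul, Real.norm_of_nonneg (sub_nonneg.2 ha.2), Real.norm_eq_abs]
    _ ≤ ‖x - y‖ + |a - b| * ‖p - y‖ := by gcongr

lemma mapsTo_lineMap_convexJoin (K : Set E) (p : E) {a : ℝ} (ha : a ∈ Icc 0 1) :
    MapsTo (AffineMap.lineMap · p a) K (convexJoin ℝ K {p}) := by
  intro x hx
  refine segment_subset_convexJoin hx (mem_singleton p) ?_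
  rw [segment_eq_image_lineMap]
  exact mem_image_of_mem _ ha

lemma prism_lineMap_mem_ripsChains {p : E} {a b C : ℝ} (ha : a ∈ Icc 0 1) (hb : b ∈ Icc 0 1)
    (hK : K ⊆ Metric.closedBall p C) (hε : δ + |a - b| * C ≤ ε) {c : OrderedChain E}
    (hc : c ∈ ripsChains K δ) :
    prism (AffineMap.lineMap · p a) (AffineMap.lineMap · p b) c ∈
      ripsChains (convexJoin ℝ K {p}) ε := by
  refine prism_mem_ripsChains (mapsTo_lineMap_convexJoin K p ha) (mapsTo_lineMap_convexJoin K p hb)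
    (fun x _ y hy hxy ↦ ?_) hc
  have hyp : dist y p ≤ C := hK hy
  have hstep : 0 ≤ |a - b| * C := mul_nonneg (abs_nonneg _) (dist_nonneg.trans hyp)
  refine ⟨?_, ?_, ?_⟩
  · have := dist_lineMap_lineMap_le_add p x y ha a
    rw [sub_self, abs_zero, zero_mul] at this
    linarith
  · have := dist_lineMap_lineMap_le_add p x y ha b
    have : |a - b| * dist y p ≤ |a - b| * C := by gcongr
    linarith
  · have := dist_lineMap_lineMap_le_add p x y hb b
    rw [sub_self, abs_zero, zero_mul] at this
    linarith

lemma exists_mem_ripsChains_boundary_eq (hK : Bornology.IsBounded K) (hKne : K.Nonempty) (p : E)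
    (hε : 0 ≤ ε) (hδε : δ < ε) {z : OrderedChain E} (hz : z ∈ ripsChains K δ)
    (hbz : boundary z = 0) : ∃ c ∈ ripsChains (convexJoin ℝ K {p}) ε, boundary c = z := by
  obtain ⟨C, hC₀, hC⟩ := hK.subset_closedBall_lt 0 p
  obtain ⟨m, hm⟩ := exists_nat_gt (C / (ε - δ))
  have hm₀ : (0 : ℝ) < m := (div_pos hC₀ (sub_pos.2 hδε)).trans hm
  -- Cut the contraction to `p` into `m` steps so short that each prism keeps its scale below `ε`.
  let φ (t : ℕ) (x : E) : E := AffineMap.lineMap x p (t / m : ℝ)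
  have hφ_zero : φ 0 = id := by ext x; simp [φ]
  have hφ_last (x : E) : φ m x = p := by simp [φ, hm₀.ne']
  have hprism : ∑ t ∈ Finset.range m, prism (φ t) (φ (t + 1)) z ∈
      ripsChains (convexJoin ℝ K {p}) ε := by
    refine sum_mem fun t ht ↦ prism_lineMap_mem_ripsChains ?_ ?_ hC ?_ hz
    · rw [Finset.mem_range] at ht
      exact ⟨by positivity, div_le_one_of_le₀ (mod_cast ht.le) hm₀.le⟩
    · rw [Finset.mem_range] at ht
      exact ⟨by positivity, div_le_one_of_le₀ (mod_cast ht) hm₀.le⟩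
    · have hdiff : (t / m - (t + 1 : ℕ) / m : ℝ) = -(1 / m) := by push_cast; ring
      rw [hdiff, abs_neg, abs_of_pos (by positivity), one_div_mul_eq_div]
      have : C / m < ε - δ := (div_lt_comm₀ (sub_pos.2 hδε) hm₀).1 hm
      linarith
  have hcone : cone p (map (φ m) z) ∈ ripsChains (convexJoin ℝ K {p}) ε := by
    refine map_mem_of_mem_supported (T := cone p ∘ₗ map (φ m)) (fun l _ ↦ ?_) hz
    simp only [LinearMap.comp_apply, map_single, cone_single]
    exact single_mem_ripsChains_of_forall_eq (subset_convexJoin_right hKne (mem_singleton p)) hε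
      (by simp [hφ_last])
  refine ⟨_, add_mem hprism hcone, ?_⟩
  rw [map_add, boundary_sum_prism φ m hbz, hφ_zero, map_id, boundary_cone, boundary_map, hbz,
    map_zero, map_zero, add_zero, add_assoc, ZModModule.add_self, add_zero]

end Contraction

end OrderedChain

section OctahedralSphere

open Set Submodule

/-- The boundary of the cross-polytope with vertices `± e 0, …, ± e k`, as an iterated join. -/
def octahedralSphere {E : Type*} [AddCommGroup E] [Module ℝ E] (e : ℕ → E) : ℕ → Set E
  | 0 => {e 0, -e 0}
  | k + 1 => convexJoin ℝ (octahedralSphere e k) {e (k + 1), -e (k + 1)}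

section Module

variable {E : Type*} [AddCommGroup E] [Module ℝ E] {e : ℕ → E} {k : ℕ}

lemma mem_octahedralSphere_zero : e 0 ∈ octahedralSphere e 0 :=
  mem_insert _ _

lemma octahedralSphere_subset_succ : octahedralSphere e k ⊆ octahedralSphere e (k + 1) :=
  subset_convexJoin_left (insert_nonempty _ _)

lemma octahedralSphere_nonempty : (octahedralSphere e k).Nonempty := by
  induction k with
  | zero => exact ⟨_, mem_octahedralSphere_zero⟩
  | succ k ih => exact ih.mono octahedralSphere_subset_succ

lemma convexJoin_subset_octahedralSphere_succ :
    convexJoin ℝ (octahedralSphere e k) {e (k + 1)} ⊆ octahedralSphere e (k + 1) :=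
  convexJoin_mono_right (singleton_subset_iff.2 (mem_insert _ _))

lemma neg_mem_octahedralSphere {x : E} (hx : x ∈ octahedralSphere e k) :
    -x ∈ octahedralSphere e k := by
  induction k generalizing x with
  | zero =>
    obtain rfl | rfl := hx <;> simp [octahedralSphere]
  | succ k ih =>
    obtain ⟨a, ha, b, hb, s, t, hs, ht, hst, rfl⟩ := mem_convexJoin.1 hx
    refine mem_convexJoin.2 ⟨-a, ih ha, -b, ?_, s, t, hs, ht, hst, by module⟩
    obtain rfl | rfl := hb <;> simp

lemma octahedralSphere_subset_span : octahedralSphere e k ⊆ span ℝ (e '' Iic k) := by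
  have hsingle {i j : ℕ} (hij : i ≤ j) : e i ∈ span ℝ (e '' Iic j) :=
    subset_span (mem_image_of_mem e hij)
  induction k with
  | zero =>
    rintro _ (rfl | rfl)
    exacts [hsingle le_rfl, neg_mem (hsingle le_rfl)]
  | succ k ih =>
    refine convexJoin_subset (fun x hx ↦ ?_) ?_ (Submodule.convex _)
    · exact span_mono (image_mono (Iic_subset_Iic.2 k.le_succ)) (ih hx)
    · rintro _ (rfl | rfl)
      exacts [hsingle le_rfl, neg_mem (hsingle le_rfl)]

lemma ne_zero_of_mem_octahedralSphere (he : LinearIndepOn ℝ e (Iic k)) {x : E}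
    (hx : x ∈ octahedralSphere e k) : x ≠ 0 := by
  induction k generalizing x with
  | zero =>
    have := he.ne_zero (mem_Iic.2 le_rfl)
    obtain rfl | rfl := hx <;> simpa
  | succ k ih =>
    obtain ⟨a, ha, b, hb, s, t, -, -, hst, rfl⟩ := mem_convexJoin.1 hx
    have hb_notMem : b ∉ span ℝ (e '' Iic k) := by
      have hinsert : insert (k + 1) (Iic k) ⊆ Iic (k + 1) :=
        insert_subset self_mem_Iic (Iic_subset_Iic.2 k.le_succ)
      have := (he.mono hinsert).notMem_span_of_insert (by simp)
      obtain rfl | rfl := hb <;> simpa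
    intro hzero
    have ht : t = 0 := by
      by_contra ht
      refine hb_notMem ((Submodule.smul_mem_iff _ ht).1 ?_)
      rw [← neg_eq_of_add_eq_zero_right hzero]
      exact neg_mem (smul_mem _ s (octahedralSphere_subset_span ha))
    obtain rfl : s = 1 := by simpa [ht] using hst
    exact ih (he.mono (Iic_subset_Iic.2 k.le_succ)) ha (by simpa [ht] using hzero)

end Module

lemma isCompact_convexJoin {E : Type*} [AddCommGroup E] [Module ℝ E] [TopologicalSpace E]
    [ContinuousAdd E] [ContinuousSMul ℝ E] {s t : Set E} (hs : IsCompact s) (ht : IsCompact t) :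
    IsCompact (convexJoin ℝ s t) := by
  have himage : convexJoin ℝ s t =
      (fun q : ℝ × E × E ↦ (1 - q.1) • q.2.1 + q.1 • q.2.2) '' (Icc 0 1 ×ˢ s ×ˢ t) := by
    ext x
    simp only [mem_convexJoin, segment_eq_image, mem_image, mem_prod, Prod.exists]
    grind
  rw [himage]
  exact (isCompact_Icc.prod (hs.prod ht)).image (by fun_prop)

lemma isCompact_octahedralSphere {E : Type*} [AddCommGroup E] [Module ℝ E] [TopologicalSpace E]
    [ContinuousAdd E] [ContinuousSMul ℝ E] (e : ℕ → E) (k : ℕ) :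
    IsCompact (octahedralSphere e k) := by
  induction k with
  | zero => exact ((finite_singleton _).insert _).isCompact
  | succ k ih => exact isCompact_convexJoin ih (toFinite _).isCompact

end OctahedralSphere

lemma exists_odd_sign {E : Type*} [InvolutiveNeg E] {K : Set E} {g : E → ℝ}
    (hne : ∀ x ∈ K, -x ≠ x) (hg : ∀ x ∈ K, g (-x) = -g x) :
    ∃ s : E → ZMod 2, (∀ x ∈ K, s (-x) = s x + 1) ∧
      ∀ x ∈ K, ∀ y ∈ K, s x ≠ s y → 0 ∈ Set.uIcc (g x) (g y) := by
  classical
  let : LinearOrder E := linearOrderOfSTO WellOrderingRel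
  -- As `g` may vanish on `K`, ties between `x` and `-x` are broken by a well-ordering.
  let key (x : E) : ℝ ×ₗ E := toLex (g x, x)
  have hnonneg {x : E} (hx : x ∈ K) (h : key (-x) ≤ key x) : 0 ≤ g x := by
    have := Prod.Lex.monotone_fst _ _ h
    simp only [key, ofLex_toLex, hg x hx] at this
    linarith
  have hnonpos {x : E} (hx : x ∈ K) (h : key x ≤ key (-x)) : g x ≤ 0 := by
    have := Prod.Lex.monotone_fst _ _ h
    simp only [key, ofLex_toLex, hg x hx] at this
    linarith
  refine ⟨fun x ↦ if key (-x) < key x then 1 else 0, fun x hx ↦ ?_, fun x hx y hy hxy ↦ ?_⟩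
  · have hkey : key (-x) ≠ key x := fun h ↦ hne x hx (congrArg (fun q ↦ (ofLex q).2) h)
    obtain h | h := hkey.lt_or_gt <;> simp only [neg_neg, h, h.not_gt, if_true, if_false] <;> rfl
  · rw [Set.mem_uIcc]
    beta_reduce at hxy
    split_ifs at hxy with h h' h'
    · simp at hxy
    · exact .inr ⟨hnonpos hy (not_lt.1 h'), hnonneg hx h.le⟩
    · exact .inl ⟨hnonpos hx (not_lt.1 h), hnonneg hy h'.le⟩
    · simp at hxy


section BorsukUlam

open Set Metric Module OrderedChain

section OctahedralSphere

variable {E : Type*} [NormedAddCommGroup E] [NormedSpace ℝ E] {e : ℕ → E}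

lemma exists_mem_ripsChains_signCocycle_eq_one {s : ℕ → E → ZMod 2} {k : ℕ}
    (hs : ∀ i < k, ∀ x ∈ octahedralSphere e k, s i (-x) = s i x + 1) {ε : ℝ} (hε : 0 < ε) :
    ∃ c ∈ ripsChains (octahedralSphere e k) ε,
      boundary (c + map Neg.neg c) = 0 ∧ signCocycle s k c = 1 := by
  induction k generalizing ε with
  | zero =>
    refine ⟨Finsupp.single [e 0] 1, single_mem_ripsChains_of_forall_eq mem_octahedralSphere_zero
      hε.le (by simp), ?_, signCocycle_zero_singleton s (e 0)⟩
    simp [ZModModule.add_self]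
  | succ k ih =>
    obtain ⟨c, hc, hcycle, hone⟩ :=
      ih (fun i hi x hx ↦ hs i (hi.trans k.lt_succ_self) x (octahedralSphere_subset_succ hx))
        (half_pos hε)
    have hneg : map Neg.neg c ∈ ripsChains (octahedralSphere e k) (ε / 2) :=
      map_mem_ripsChains (fun x ↦ neg_mem_octahedralSphere)
        (fun x _ y _ hxy ↦ by rwa [dist_neg_neg]) hc
    obtain ⟨d, hd, hbd⟩ := exists_mem_ripsChains_boundary_eq
      (isCompact_octahedralSphere e k).isBounded octahedralSphere_nonempty (e (k + 1)) hε.le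
      (half_lt_self hε) (add_mem hc hneg) hcycle
    refine ⟨d, ripsChains_mono convexJoin_subset_octahedralSphere_succ le_rfl hd, ?_, ?_⟩
    · rw [map_add, boundary_map, hbd, map_add (map Neg.neg), map_map, neg_comp_neg, map_id,
        add_comm (map Neg.neg c), ZModModule.add_self]
    · rw [signCocycle_succ_apply, hbd, ← hone]
      exact vertexCup_signCocycle_add_map_neg
        (fun i hi x hx ↦ hs i hi x (octahedralSphere_subset_succ hx))
        (Finsupp.supported_mono (fun l hl ↦ hl.1) hc)

lemma exists_mem_ripsSimplices_forall_ne {s : ℕ → E → ZMod 2} {n : ℕ}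
    (hs : ∀ i < n, ∀ x ∈ octahedralSphere e n, s i (-x) = s i x + 1) {ε : ℝ} (hε : 0 < ε) :
    ∃ l ∈ ripsSimplices (octahedralSphere e n) ε, l ≠ [] ∧
      ∀ i < n, ∃ x ∈ l, ∃ y ∈ l, s i x ≠ s i y := by
  obtain ⟨c, hc, -, hone⟩ := exists_mem_ripsChains_signCocycle_eq_one hs hε
  obtain ⟨l, hl, hne⟩ : ∃ l ∈ ripsSimplices (octahedralSphere e n) ε,
      signCocycle s n (Finsupp.single l 1) ≠ 0 := by
    by_contra! hzero
    have := eq_of_mem_supported (g := 0) (by simpa using hzero) hc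
    simp [hone] at this
  refine ⟨l, hl, ?_, exists_ne_of_signCocycle_single_ne_zero hne⟩
  rintro rfl
  exact hne (signCocycle_nil s n)

lemma exists_mem_octahedralSphere_norm_le {n : ℕ} (he : LinearIndepOn ℝ e (Iic n))
    {f : E → Fin n → ℝ} (hf : ContinuousOn f (octahedralSphere e n))
    (hodd : ∀ x ∈ octahedralSphere e n, f (-x) = -f x) {η : ℝ} (hη : 0 < η) :
    ∃ x ∈ octahedralSphere e n, ‖f x‖ ≤ η := by
  have : IsAddTorsionFree E := .of_isTorsionFree ℝ E
  have hne (x) (hx : x ∈ octahedralSphere e n) : -x ≠ x :=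
    neg_eq_self.not.2 (ne_zero_of_mem_octahedralSphere he hx)
  choose s hs_odd hs_uIcc using fun i ↦
    exists_odd_sign (g := (f · i)) hne fun x hx ↦ congrFun (hodd x hx) i
  obtain ⟨δ, hδ, hfδ⟩ := uniformContinuousOn_iff_le.1
    ((isCompact_octahedralSphere e n).uniformContinuousOn_of_continuous hf) η hη
  obtain ⟨l, ⟨hlmem, hldist⟩, hl, hsign⟩ := exists_mem_ripsSimplices_forall_ne (e := e) (n := n)
    (s := fun i ↦ if hi : i < n then s ⟨i, hi⟩ else 0)
    (fun i hi ↦ by simpa only [dif_pos hi] using hs_odd ⟨i, hi⟩) hδ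
  obtain ⟨x, hx⟩ := List.exists_mem_of_ne_nil l hl
  refine ⟨x, hlmem x hx, (pi_norm_le_iff_of_nonneg hη.le).2 fun i ↦ ?_⟩
  obtain ⟨a, ha, b, hb, hab⟩ := hsign i i.2
  have hzero : 0 ∈ uIcc (f a i) (f b i) :=
    hs_uIcc i a (hlmem a ha) b (hlmem b hb) (by simpa using hab)
  have hclose {y : E} (hy : y ∈ l) : f y i ∈ closedBall (f x i) η :=
    (dist_le_pi_dist _ _ i).trans
      (hfδ y (hlmem y hy) x (hlmem x hx) (hldist y hy x hx))
  rw [← dist_zero_left]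
  exact (convex_closedBall (f x i) η).ordConnected.uIcc_subset (hclose ha) (hclose hb) hzero

lemma exists_mem_octahedralSphere_eq_zero {n : ℕ} (he : LinearIndepOn ℝ e (Iic n))
    {f : E → Fin n → ℝ} (hf : ContinuousOn f (octahedralSphere e n))
    (hodd : ∀ x ∈ octahedralSphere e n, f (-x) = -f x) :
    ∃ x ∈ octahedralSphere e n, f x = 0 := by
  obtain ⟨x, hx, hmin⟩ := (isCompact_octahedralSphere e n).exists_isMinOn
    octahedralSphere_nonempty hf.norm
  refine ⟨x, hx, norm_le_zero_iff.1 (le_of_forall_pos_le_add fun η hη ↦ ?_)⟩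
  obtain ⟨y, hy, hyη⟩ := exists_mem_octahedralSphere_norm_le he hf hodd hη
  rw [zero_add]
  exact (hmin hy).trans hyη

end OctahedralSphere

lemma exists_linearIndepOn_Iic {R M : Type*} [Ring R] [StrongRankCondition R] [AddCommGroup M]
    [Module R M] {n : ℕ} (hn : n < Module.rank R M) : ∃ e : ℕ → M, LinearIndepOn R e (Iic n) := by
  have := nontrivial_of_invariantBasisNumber R
  obtain ⟨v, hv⟩ : ∃ v : Fin (n + 1) → M, LinearIndependent R v := by
    rw [← le_rank_iff, Nat.cast_add_one]
    exact Cardinal.natCast_add_one_le_iff.2 hn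
  have hinj : Function.Injective fun i : Iic n ↦ Fin.ofNat (n + 1) i := fun i j hij ↦ by
    simpa [Fin.ext_iff, Nat.mod_eq_of_lt (Nat.lt_succ_of_le i.2),
      Nat.mod_eq_of_lt (Nat.lt_succ_of_le j.2), Subtype.ext_iff] using hij
  exact ⟨fun i ↦ v (Fin.ofNat (n + 1) i), hv.comp _ hinj⟩

theorem exists_mem_sphere_eq_zero_of_odd {E F : Type*} [NormedAddCommGroup E] [NormedSpace ℝ E]
    [NormedAddCommGroup F] [NormedSpace ℝ F] [FiniteDimensional ℝ F]
    (hrank : finrank ℝ F < Module.rank ℝ E) {f : E → F} (hf : ContinuousOn f (sphere 0 1))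
    (hodd : ∀ x ∈ sphere (0 : E) 1, f (-x) = -f x) : ∃ x ∈ sphere (0 : E) 1, f x = 0 := by
  obtain ⟨e, he⟩ := exists_linearIndepOn_Iic hrank
  let r (x : E) : E := ‖x‖⁻¹ • x
  have hr (x) (hx : x ∈ octahedralSphere e (finrank ℝ F)) : r x ∈ sphere 0 1 := by
    simpa using norm_smul_inv_norm (𝕜 := ℝ) (ne_zero_of_mem_octahedralSphere he hx)
  have hr_cont : ContinuousOn r (octahedralSphere e (finrank ℝ F)) :=
    (continuousOn_id.norm.inv₀ fun x hx ↦
      norm_ne_zero_iff.2 (ne_zero_of_mem_octahedralSphere he hx)).smul continuousOn_id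
  let coord : F ≃L[ℝ] (Fin (finrank ℝ F) → ℝ) := (finBasis ℝ F).equivFunL
  obtain ⟨x, hx, hzero⟩ := exists_mem_octahedralSphere_eq_zero he (f := fun x ↦ coord (f (r x)))
    (coord.continuous.comp_continuousOn (hf.comp hr_cont hr))
    (fun x hx ↦ by simp only [r, norm_neg, smul_neg]; rw [hodd _ (hr x hx), map_neg])
  exact ⟨r x, hr x hx, coord.map_eq_zero_iff.1 hzero⟩

end BorsukUlam

section LusternikSchnirelmann

open Set Metric Module

lemma mem_of_infDist_eq {X : Type*} [PseudoMetricSpace X] {A : Set X} {x y : X}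
    (hA : IsClosed A) (hx : x ∈ A) (h : infDist x A = infDist y A) : y ∈ A := by
  rw [hA.mem_iff_infDist_zero ⟨x, hx⟩, ← h, infDist_zero_of_mem hx]

theorem exists_antipodal_pair_of_finite_ball_cover_general {X ι : Type*} [NormedAddCommGroup X]
    [NormedSpace ℝ X] [Nontrivial X] [Finite ι] (hι : Nat.card ι ≤ Module.rank ℝ X)
    {A : ι → Set X} (hA : ∀ i, IsClosed (A i)) (hcover : sphere (0 : X) 1 ⊆ ⋃ i, A i) :
    ∃ i, ∃ y : X, ‖y‖ = 1 ∧ y ∈ A i ∧ -y ∈ A i := by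
  have := Fintype.ofFinite ι
  classical
  obtain ⟨x₀, hx₀⟩ := (NormedSpace.sphere_nonempty (x := (0 : X))).2 zero_le_one
  obtain ⟨i₀, -⟩ := mem_iUnion.1 (hcover hx₀)
  let f (x : X) (i : {i // i ≠ i₀}) : ℝ := infDist x (A i) - infDist (-x) (A i)
  obtain ⟨y, hy, hfy⟩ : ∃ y ∈ sphere (0 : X) 1, f y = 0 := by
    refine exists_mem_sphere_eq_zero_of_odd ?_ (by fun_prop) fun x _ ↦ ?_
    · rw [finrank_fintype_fun_eq_card]
      refine lt_of_lt_of_le (Nat.cast_lt.2 ?_) hι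
      rw [Nat.card_eq_fintype_card]
      exact Fintype.card_subtype_lt (not_not.2 (Eq.refl i₀))
    · ext i
      simp [f]
  have hdist (i) (hi : i ≠ i₀) : infDist y (A i) = infDist (-y) (A i) :=
    sub_eq_zero.1 (congrFun hfy ⟨i, hi⟩)
  obtain ⟨j, hj⟩ := mem_iUnion.1 (hcover hy)
  obtain ⟨k, hk⟩ := mem_iUnion.1 (hcover (show -y ∈ sphere 0 1 by simpa using hy))
  rw [mem_sphere_zero_iff_norm] at hy
  by_cases hj₀ : j = i₀
  · by_cases hk₀ : k = i₀
    · exact ⟨i₀, y, hy, hj₀ ▸ hj, hk₀ ▸ hk⟩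
    · exact ⟨k, y, hy, mem_of_infDist_eq (hA k) hk (hdist k hk₀).symm, hk⟩
  · exact ⟨j, y, hy, hj, mem_of_infDist_eq (hA j) hj (hdist j hj₀)⟩

end LusternikSchnirelmann

/-- if finitely many closed balls cover the unit sphere of an
infinite-dimensional Banach space, one of them contains an antipodal pair of unit vectors. -/
theorem exists_antipodal_pair_of_finite_ball_cover
    {X : Type*} [NormedAddCommGroup X] [NormedSpace ℝ X] [CompleteSpace X]
    (hinf : ¬ FiniteDimensional ℝ X)
    (n : ℕ) (c : Fin n → X) (r : Fin n → ℝ)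
    (hcover : Metric.sphere (0 : X) 1 ⊆ ⋃ i, Metric.closedBall (c i) (r i)) :
    ∃ i, ∃ y : X, ‖y‖ = 1 ∧ y ∈ Metric.closedBall (c i) (r i) ∧
      -y ∈ Metric.closedBall (c i) (r i) := by
  have : Nontrivial X := not_subsingleton_iff_nontrivial.1 fun _ ↦ hinf inferInstance
  have hrank : Cardinal.aleph0 ≤ Module.rank ℝ X := not_lt.1 (Module.rank_lt_aleph0_iff.not.2 hinf)
  exact exists_antipodal_pair_of_finite_ball_cover_general
    (Cardinal.natCast_lt_aleph0.le.trans hrank) (fun _ ↦ Metric.isClosed_closedBall) hcover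
end

section
/- For 2 ≤ p < ∞ and each n ≥ 1, the 2n functions ±f_i with f_i = n^{1/p}·χ_{[(i−1)/n, i/n]} form a net in S_{L_p[0,1]} such that every f ∈ S_{L_p[0,1]} satisfies min over i and sign of ‖f ∓ f_i‖ ≤ ( (1/2)[(1 + n^{−1/p})^p + (1 − n^{−1/p})^p] + 1 )^{1/p}. Consequently T(L_p[0,1]) ≤ 2^{1/p} for 2 ≤ p < ∞. -/
open scoped ENNReal NNReal

/-- The thickness constant `T(X)`: the infimum of `ε > 0` such that finitely many closed
`ε`-balls centered at unit vectors cover the closed unit ball of `X`. -/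
noncomputable def thickness (X : Type*) [NormedAddCommGroup X] : ℝ :=
  sInf {ε : ℝ | 0 < ε ∧ ∃ F : Finset X, (∀ x ∈ F, ‖x‖ = 1) ∧
    ∀ y : X, ‖y‖ ≤ 1 → ∃ x ∈ F, ‖y - x‖ ≤ ε}

/-- Whitley's thickness constant `T_W(X)`: the infimum of `ε > 0` such that there is a finite
`ε`-net consisting of unit vectors for the unit sphere of `X`. -/
noncomputable def whitleyThickness (X : Type*) [NormedAddCommGroup X] : ℝ :=
  sInf {ε : ℝ | 0 < ε ∧ ∃ F : Finset X, (∀ x ∈ F, ‖x‖ = 1) ∧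
    ∀ y : X, ‖y‖ = 1 → ∃ x ∈ F, ‖y - x‖ ≤ ε}

open MeasureTheory

/-- The function `f_i = n^{1/p} · χ_{[(i)/n, (i+1)/n]}` (with `i : Fin n`, so the intervals are
`[(i−1)/n, i/n]` in one-based indexing) as an element of `L_p[0,1]`. -/
noncomputable def stepFn (p : ℝ≥0∞) (n : ℕ) (i : Fin n) :
    Lp ℝ p (volume.restrict (Set.Icc (0:ℝ) 1)) :=
  indicatorConstLp p
    (measurableSet_Icc : MeasurableSet (Set.Icc ((i : ℝ) / n) (((i : ℝ) + 1) / n)))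
    (measure_ne_top _ _) ((n : ℝ) ^ (1 / p.toReal))

/-!
Hanner's inequality says that, for given norms of `f` and `g`, the sum
`‖f + g‖ ^ p + ‖f - g‖ ^ p` is largest when `f` and `g` are proportional. Since
`(a + b) ^ p + |a - b| ^ p` is a concave function of `(a ^ p, b ^ p)` for `p ≥ 2`, it lies below
the linear function of `(a ^ p, b ^ p)` that supports it at `(‖f‖, ‖g‖)`; integrating this bound
over the values `(‖f x‖, ‖g x‖)` gives the inequality.

Among `n` disjoint blocks, one carries at most `1 / n` of the mass of `‖f x‖ ^ p`. Hanner's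
inequality on that block, against the unit vector `g` supported there, together with the mass of
`‖f x‖ ^ p` outside the block, bounds `‖f + g‖ ^ p + ‖f - g‖ ^ p`, hence the smaller of the two
norms. As `n → ∞`, the bound tends to `2 ^ (1 / p)`.
-/

open Set Filter Topology
open scoped Function

section RealInequalities

lemma convexOn_add_le_add_of_add_eq {s : Set ℝ} {f : ℝ → ℝ} (hf : ConvexOn ℝ s f)
    {x y z w : ℝ} (hx : x ∈ s) (hw : w ∈ s) (hxy : x ≤ y) (hyw : y ≤ w) (h : y + z = x + w) :
    f y + f z ≤ f x + f w := by
  have hy : y ∈ segment ℝ x w := by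
    rw [segment_eq_Icc (hxy.trans hyw)]
    exact ⟨hxy, hyw⟩
  obtain ⟨a, b, ha, hb, hab, rfl⟩ := hy
  have hz : z = b • x + a • w := by
    simp only [smul_eq_mul] at h ⊢
    linear_combination h - (x + w) * hab
  have hfy := hf.2 hx hw ha hb hab
  have hfz := hf.2 hx hw hb ha (by rwa [add_comm])
  rw [hz]
  simp only [smul_eq_mul] at hfy hfz ⊢
  linear_combination hfy + hfz + (f x + f w) * hab

lemma rpow_add_rpow_le_of_add_eq {q x y z w : ℝ} (hq : 1 ≤ q) (hx : 0 ≤ x) (hxy : x ≤ y)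
    (hyw : y ≤ w) (h : y + z = x + w) : y ^ q + z ^ q ≤ x ^ q + w ^ q :=
  convexOn_add_le_add_of_add_eq (convexOn_rpow hq) hx (hx.trans (hxy.trans hyw)) hxy hyw h

lemma min_le_rpow_of_rpow_add_rpow_le {q u v M : ℝ} (hq : 0 < q) (hu : 0 ≤ u) (hv : 0 ≤ v)
    (h : u ^ q + v ^ q ≤ 2 * M) : min u v ≤ M ^ (1 / q) := by
  have hmin : 0 ≤ min u v := le_min hu hv
  have hmu : min u v ^ q ≤ u ^ q := by gcongr; exact min_le_left u v
  have hmv : min u v ^ q ≤ v ^ q := by gcongr; exact min_le_right u v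
  have hM : min u v ^ q ≤ M := by linarith
  have hpos : 0 ≤ min u v ^ q := by positivity
  rwa [one_div, Real.le_rpow_inv_iff_of_pos hmin (hpos.trans hM) hq]

lemma le_of_hasDerivAt_nonneg_of_nonpos {f f' : ℝ → ℝ} {l c x : ℝ} (hlc : l ≤ c)
    (hf : ∀ y, l ≤ y → HasDerivAt f (f' y) y) (hleft : ∀ y, l ≤ y → y ≤ c → 0 ≤ f' y)
    (hright : ∀ y, c ≤ y → f' y ≤ 0) (hx : l ≤ x) : f x ≤ f c := by
  rcases le_total x c with hxc | hcx
  · refine monotoneOn_of_hasDerivWithinAt_nonneg (f' := f') (convex_Icc l c)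
      (fun y hy => (hf y hy.1).continuousAt.continuousWithinAt)
      (fun y hy => (hf y (interior_subset hy).1).hasDerivWithinAt)
      (fun y hy => hleft y (interior_subset hy).1 (interior_subset hy).2)
      ⟨hx, hxc⟩ (right_mem_Icc.2 hlc) hxc
  · refine antitoneOn_of_hasDerivWithinAt_nonpos (f' := f') (convex_Ici c)
      (fun y hy => (hf y (hlc.trans hy)).continuousAt.continuousWithinAt)
      (fun y hy => (hf y (hlc.trans (interior_subset hy))).hasDerivWithinAt)
      (fun y hy => hright y (interior_subset hy)) self_mem_Ici hcx hcx

end RealInequalities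

/-- The right-hand side `(a + b) ^ p + |a - b| ^ p` of Hanner's inequality. -/
noncomputable def hannerSum (p a b : ℝ) : ℝ :=
  (a + b) ^ p + |a - b| ^ p

/-- The partial derivative of `hannerSum p` in its first argument, divided by `p`. The factor
`|a - b| ^ (p - 2) * (a - b)` is the signed power `± |a - b| ^ (p - 1)`. -/
noncomputable def hannerPartial (p a b : ℝ) : ℝ :=
  (a + b) ^ (p - 1) + |a - b| ^ (p - 2) * (a - b)

section Scalar

variable {p a b t : ℝ}

lemma abs_rpow_sub_two_mul_self (hp : 1 < p) (ha : 0 ≤ a) : |a| ^ (p - 2) * a = a ^ (p - 1) := by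
  rcases ha.eq_or_lt with rfl | ha
  · simp [Real.zero_rpow (sub_pos.2 hp).ne']
  · rw [abs_of_pos ha, ← Real.rpow_add_one ha.ne']
    ring_nf

lemma hannerPartial_of_le (hp : 1 < p) (hab : b ≤ a) :
    hannerPartial p a b = (a + b) ^ (p - 1) + (a - b) ^ (p - 1) := by
  rw [hannerPartial, abs_rpow_sub_two_mul_self hp (sub_nonneg.2 hab)]

lemma hannerPartial_of_ge (hp : 1 < p) (hab : a ≤ b) :
    hannerPartial p a b = (a + b) ^ (p - 1) - (b - a) ^ (p - 1) := by
  rw [hannerPartial, ← abs_rpow_sub_two_mul_self hp (sub_nonneg.2 hab), abs_sub_comm a b]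
  ring

lemma hasDerivAt_hannerSum (hp : 1 < p) (a b : ℝ) :
    HasDerivAt (fun a => hannerSum p a b) (p * hannerPartial p a b) a := by
  have hadd : HasDerivAt (fun a => (a + b) ^ p) (1 * p * (a + b) ^ (p - 1)) a :=
    ((hasDerivAt_id a).add_const b).rpow_const (.inr hp.le)
  have hsub : HasDerivAt (fun a => |a - b| ^ p) (p * |a - b| ^ (p - 2) * (a - b)) a :=
    (hasDerivAt_abs_rpow (a - b) hp).comp_sub_const a b
  refine (hadd.add hsub).congr_deriv ?_
  rw [hannerPartial]
  ring

lemma continuous_hannerSum (hp : 1 < p) (b : ℝ) : Continuous fun a => hannerSum p a b :=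
  continuous_iff_continuousAt.2 fun a => (hasDerivAt_hannerSum hp a b).continuousAt

lemma hannerPartial_monotoneOn (hp : 2 ≤ p) (ha : 0 ≤ a) :
    MonotoneOn (hannerPartial p a) (Ici 0) := by
  have hp1 : 1 < p := by linarith
  have hq : 1 ≤ p - 1 := by linarith
  have hleft : MonotoneOn (hannerPartial p a) (Icc 0 a) := fun b hb c hc hbc => by
    rw [hannerPartial_of_le hp1 hb.2, hannerPartial_of_le hp1 hc.2,
      add_comm ((a + c) ^ _)]
    exact rpow_add_rpow_le_of_add_eq hq (sub_nonneg.2 hc.2) (by linarith [hb.1, hc.1])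
      (by linarith) (by ring)
  have hright : MonotoneOn (hannerPartial p a) (Ici a) := fun b hb c hc hbc => by
    rw [hannerPartial_of_ge hp1 hb, hannerPartial_of_ge hp1 hc, sub_le_sub_iff,
      add_comm (_ ^ _) ((b - a) ^ _)]
    exact rpow_add_rpow_le_of_add_eq hq (sub_nonneg.2 hb) (by linarith) (by linarith) (by ring)
  rw [← Icc_union_Ici_eq_Ici ha]
  exact hleft.union_right hright (isGreatest_Icc ha) isLeast_Ici

lemma hannerPartial_nonneg (hp : 2 ≤ p) (ha : 0 ≤ a) (hb : 0 ≤ b) : 0 ≤ hannerPartial p a b :=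
  calc 0 ≤ (a + 0) ^ (p - 1) + (a - 0) ^ (p - 1) := by simp only [add_zero, sub_zero]; positivity
    _ = hannerPartial p a 0 := (hannerPartial_of_le (by linarith) ha).symm
    _ ≤ hannerPartial p a b := hannerPartial_monotoneOn hp ha self_mem_Ici hb hb

lemma hannerSum_monotoneOn (hp : 2 ≤ p) (hb : 0 ≤ b) :
    MonotoneOn (fun a => hannerSum p a b) (Ici 0) := by
  have hp1 : 1 < p := by linarith
  refine monotoneOn_of_deriv_nonneg (convex_Ici 0) (continuous_hannerSum hp1 b).continuousOn
    (fun a _ => (hasDerivAt_hannerSum hp1 a b).differentiableAt.differentiableWithinAt)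
    fun a ha => ?_
  rw [interior_Ici] at ha
  rw [(hasDerivAt_hannerSum hp1 a b).deriv]
  exact mul_nonneg (by linarith) (hannerPartial_nonneg hp ha.le hb)

lemma hannerSum_mul (ht : 0 ≤ t) (ha : 0 ≤ a) (hb : 0 ≤ b) :
    hannerSum p (t * a) (t * b) = t ^ p * hannerSum p a b := by
  rw [hannerSum, hannerSum, ← mul_add, ← mul_sub, abs_mul, abs_of_nonneg ht,
    Real.mul_rpow ht (add_nonneg ha hb), Real.mul_rpow ht (abs_nonneg _), mul_add]

lemma hannerPartial_mul (hp : 1 < p) (ht : 0 ≤ t) (ha : 0 ≤ a) (hb : 0 ≤ b) :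
    hannerPartial p (t * a) (t * b) = t ^ (p - 1) * hannerPartial p a b := by
  rw [hannerPartial, hannerPartial, ← mul_add, ← mul_sub, abs_mul,
    Real.mul_rpow ht (add_nonneg ha hb), Real.mul_rpow (abs_nonneg t) (abs_nonneg _), mul_add,
    ← abs_rpow_sub_two_mul_self hp ht]
  ring

/-- Euler's identity for the `p`-homogeneous function `hannerSum p`. -/
lemma hannerSum_eq_mul_hannerPartial_add (hp : 1 < p) (ha : 0 ≤ a) (hb : 0 ≤ b) :
    hannerSum p a b = a * hannerPartial p a b + b * hannerPartial p b a := by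
  have hpow : ∀ x : ℝ, 0 ≤ x → x ^ p = x ^ (p - 1) * x := fun x hx => by
    rw [← Real.rpow_add_one' hx (by linarith), sub_add_cancel]
  rw [hannerSum, hannerPartial, hannerPartial, add_comm b a, abs_sub_comm b a,
    hpow _ (add_nonneg ha hb), hpow _ (abs_nonneg _),
    ← abs_rpow_sub_two_mul_self hp (abs_nonneg (a - b)), abs_abs]
  linear_combination |a - b| ^ (p - 2) * abs_mul_abs_self (a - b)

lemma hasDerivAt_hannerSum_sub_mul_rpow (hp : 1 < p) {A B x : ℝ} (hA : 0 < A) (hB : 0 ≤ B)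
    (hx : 0 ≤ x) (b : ℝ) :
    HasDerivAt (fun a => hannerSum p a b - hannerPartial p A B / A ^ (p - 1) * a ^ p)
      (p * (hannerPartial p x b - hannerPartial p x (x / A * B))) x := by
  have hscale :
      hannerPartial p x (x / A * B) = hannerPartial p A B / A ^ (p - 1) * x ^ (p - 1) := by
    have := hannerPartial_mul hp (div_nonneg hx hA.le) hA.le hB
    rw [div_mul_cancel₀ x hA.ne', Real.div_rpow hx hA.le] at this
    rw [this]
    ring
  refine ((hasDerivAt_hannerSum hp x b).sub
    ((Real.hasDerivAt_rpow_const (.inr hp.le)).const_mul _)).congr_deriv ?_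
  rw [hscale]
  ring

lemma hannerSum_sub_mul_rpow_le (hp : 2 ≤ p) {A B : ℝ} (hA : 0 < A) (hB : 0 ≤ B) (ha : 0 ≤ a)
    (ht : 0 ≤ t) :
    hannerSum p a (t * B) - hannerPartial p A B / A ^ (p - 1) * a ^ p ≤
      hannerSum p (t * A) (t * B) - hannerPartial p A B / A ^ (p - 1) * (t * A) ^ p := by
  have hmem : ∀ x : ℝ, 0 ≤ x → 0 ≤ x / A * B := fun x hx => by positivity
  have htA : 0 ≤ t * A := by positivity
  have htB : 0 ≤ t * B := by positivity
  refine le_of_hasDerivAt_nonneg_of_nonpos htA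
    (fun x hx => hasDerivAt_hannerSum_sub_mul_rpow (by linarith) hA hB hx (t * B))
    (fun x hx hxt => ?_) (fun x htx => ?_) ha
  · refine mul_nonneg (by linarith) (sub_nonneg.2 ?_)
    refine hannerPartial_monotoneOn hp hx (hmem x hx) htB ?_
    gcongr
    exact (div_le_iff₀ hA).2 hxt
  · have hx : 0 ≤ x := htA.trans htx
    refine mul_nonpos_of_nonneg_of_nonpos (by linarith) (sub_nonpos.2 ?_)
    refine hannerPartial_monotoneOn hp hx htB (hmem x hx) ?_
    gcongr
    exact (le_div_iff₀ hA).2 htx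

lemma exists_hannerSum_le_mul_rpow_add (hp : 2 ≤ p) {A B : ℝ} (hA : 0 < A) (hB : 0 < B) :
    ∃ α β : ℝ, (∀ a b : ℝ, 0 ≤ a → 0 ≤ b → hannerSum p a b ≤ α * a ^ p + β * b ^ p) ∧
      α * A ^ p + β * B ^ p = hannerSum p A B := by
  have hp1 : 1 < p := by linarith
  have heuler := hannerSum_eq_mul_hannerPartial_add hp1 hA.le hB.le
  have hpow : ∀ x : ℝ, 0 < x → ∀ c : ℝ, c / x ^ (p - 1) * x ^ p = x * c := fun x hx c => by
    rw [Real.rpow_sub_one hx.ne']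
    field_simp
  refine ⟨hannerPartial p A B / A ^ (p - 1), hannerPartial p B A / B ^ (p - 1),
    fun a b ha hb => ?_, by rw [hpow A hA, hpow B hB, heuler]⟩
  have ht : 0 ≤ b / B := by positivity
  have hmax := hannerSum_sub_mul_rpow_le hp hA hB.le ha ht
  rw [hannerSum_mul ht hA.le hB.le, Real.mul_rpow ht hA.le, mul_left_comm, hpow A hA, ← mul_sub,
    heuler, add_sub_cancel_left, div_mul_cancel₀ b hB.ne', Real.div_rpow hb hB.le,
    ← hpow B hB] at hmax
  have hBp : B ^ p ≠ 0 := (Real.rpow_pos_of_pos hB p).ne'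
  have hval : b ^ p / B ^ p * (hannerPartial p B A / B ^ (p - 1) * B ^ p) =
      hannerPartial p B A / B ^ (p - 1) * b ^ p := by field_simp
  linarith

end Scalar

lemma norm_add_rpow_add_norm_sub_rpow_le_hannerSum {E : Type*} [NormedAddCommGroup E]
    [InnerProductSpace ℝ E] {p : ℝ} (hp : 2 ≤ p) (x y : E) :
    ‖x + y‖ ^ p + ‖x - y‖ ^ p ≤ hannerSum p ‖x‖ ‖y‖ := by
  have hsq : ∀ c : ℝ, 0 ≤ c → c ^ p = (c ^ 2) ^ (p / 2) := fun c hc => by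
    rw [← Real.rpow_natCast, ← Real.rpow_mul hc]
    congr 1
    push_cast
    ring
  have hlow : |‖x‖ - ‖y‖| ≤ ‖x + y‖ := by
    simpa using abs_norm_sub_norm_le x (-y)
  rw [hannerSum, add_comm (_ ^ p) (|_| ^ p), hsq _ (norm_nonneg _), hsq _ (norm_nonneg _),
    hsq _ (abs_nonneg _), hsq _ (by positivity)]
  refine rpow_add_rpow_le_of_add_eq (by linarith) (by positivity) (by gcongr)
    (by gcongr; exact norm_add_le x y) ?_
  rw [parallelogram_law_with_norm ℝ, sq_abs]
  ring

section LpNorm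

variable {α E : Type*} [MeasurableSpace α] {μ : Measure α} [NormedAddCommGroup E]
  {p : ℝ≥0∞} {f g : α → E} {s : Set α}

lemma two_le_toReal (hp2 : 2 ≤ p) (hp : p ≠ ∞) : 2 ≤ p.toReal := by
  simpa using ENNReal.toReal_mono hp hp2

lemma lpNorm_congr_ae (h : f =ᵐ[μ] g) : lpNorm f p μ = lpNorm g p μ := by
  by_cases hf : AEStronglyMeasurable f μ
  · rw [← toReal_eLpNorm hf, ← toReal_eLpNorm (hf.congr h), eLpNorm_congr_ae h]
  · rw [lpNorm_of_not_aestronglyMeasurable hf,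
      lpNorm_of_not_aestronglyMeasurable fun hg => hf (hg.congr h.symm)]

lemma lpNorm_rpow_toReal (hp0 : p ≠ 0) (hp : p ≠ ∞) (hf : AEStronglyMeasurable f μ) :
    lpNorm f p μ ^ p.toReal = ∫ x, ‖f x‖ ^ p.toReal ∂μ := by
  rw [lpNorm_eq_integral_norm_rpow_toReal hp0 hp hf,
    Real.rpow_inv_rpow (integral_nonneg fun x => by positivity) (ENNReal.toReal_pos hp0 hp).ne']

lemma lpNorm_rpow_restrict_add_compl (hp0 : p ≠ 0) (hp : p ≠ ∞) (hs : MeasurableSet s)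
    (hf : MemLp f p μ) :
    lpNorm f p (μ.restrict s) ^ p.toReal + lpNorm f p (μ.restrict sᶜ) ^ p.toReal =
      lpNorm f p μ ^ p.toReal := by
  rw [lpNorm_rpow_toReal hp0 hp hf.1.restrict, lpNorm_rpow_toReal hp0 hp hf.1.restrict,
    lpNorm_rpow_toReal hp0 hp hf.1, integral_add_compl hs (hf.integrable_norm_rpow hp0 hp)]

lemma lpNorm_restrict_le (hp0 : p ≠ 0) (hp : p ≠ ∞) (hs : MeasurableSet s) (hf : MemLp f p μ) :
    lpNorm f p (μ.restrict s) ≤ lpNorm f p μ := by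
  have hsplit := lpNorm_rpow_restrict_add_compl hp0 hp hs hf
  have hcompl : 0 ≤ lpNorm f p (μ.restrict sᶜ) ^ p.toReal := Real.rpow_nonneg lpNorm_nonneg _
  rw [← Real.rpow_le_rpow_iff lpNorm_nonneg lpNorm_nonneg (ENNReal.toReal_pos hp0 hp)]
  linarith

section Hanner

variable [InnerProductSpace ℝ E]

lemma lpNorm_rpow_add_le_of_hannerSum_le (hp2 : 2 ≤ p) (hp : p ≠ ∞) (hf : MemLp f p μ)
    (hg : MemLp g p μ) {c d : ℝ} (hcd : ∀ a b : ℝ, 0 ≤ a → 0 ≤ b →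
      hannerSum p.toReal a b ≤ c * a ^ p.toReal + d * b ^ p.toReal) :
    lpNorm (f + g) p μ ^ p.toReal + lpNorm (f - g) p μ ^ p.toReal ≤
      c * lpNorm f p μ ^ p.toReal + d * lpNorm g p μ ^ p.toReal := by
  have hp0 : p ≠ 0 := (zero_lt_two.trans_le hp2).ne'
  have hint : ∀ {h : α → E}, MemLp h p μ → Integrable (fun x => ‖h x‖ ^ p.toReal) μ :=
    fun hh => hh.integrable_norm_rpow hp0 hp
  have hpow : ∀ {h : α → E}, MemLp h p μ → lpNorm h p μ ^ p.toReal = ∫ x, ‖h x‖ ^ p.toReal ∂μ :=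
    fun hh => lpNorm_rpow_toReal hp0 hp hh.1
  rw [hpow (hf.add hg), hpow (hf.sub hg), hpow hf, hpow hg, ← integral_const_mul,
    ← integral_const_mul, ← integral_add (hint (hf.add hg)) (hint (hf.sub hg)),
    ← integral_add ((hint hf).const_mul c) ((hint hg).const_mul d)]
  exact integral_mono ((hint (hf.add hg)).add (hint (hf.sub hg)))
    (((hint hf).const_mul c).add ((hint hg).const_mul d)) fun x =>
      (norm_add_rpow_add_norm_sub_rpow_le_hannerSum (two_le_toReal hp2 hp) (f x) (g x)).trans
        (hcd _ _ (norm_nonneg _) (norm_nonneg _))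

theorem hanner_inequality (hp2 : 2 ≤ p) (hp : p ≠ ∞) (hf : MemLp f p μ) (hg : MemLp g p μ) :
    lpNorm (f + g) p μ ^ p.toReal + lpNorm (f - g) p μ ^ p.toReal ≤
      hannerSum p.toReal (lpNorm f p μ) (lpNorm g p μ) := by
  have hp1 : 1 ≤ p := one_le_two.trans hp2
  have hA : 0 ≤ lpNorm f p μ := lpNorm_nonneg
  have hB : 0 ≤ lpNorm g p μ := lpNorm_nonneg
  by_cases hzero : lpNorm f p μ = 0 ∨ lpNorm g p μ = 0
  · have habs : |lpNorm f p μ - lpNorm g p μ| = lpNorm f p μ + lpNorm g p μ := by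
      rcases hzero with h | h <;> simp [h, abs_of_nonneg, hA, hB]
    rw [hannerSum, habs]
    gcongr
    · exact lpNorm_nonneg
    · exact lpNorm_add_le hf hp1
    · exact lpNorm_nonneg
    · exact lpNorm_sub_le hf hp1
  · obtain ⟨hA0, hB0⟩ := not_or.1 hzero
    obtain ⟨c, d, hle, heq⟩ := exists_hannerSum_le_mul_rpow_add (two_le_toReal hp2 hp)
      (hA.lt_of_ne' hA0) (hB.lt_of_ne' hB0)
    exact (lpNorm_rpow_add_le_of_hannerSum_le hp2 hp hf hg hle).trans_eq heq

lemma lpNorm_rpow_add_le_of_ae_eq_zero_compl (hp2 : 2 ≤ p) (hp : p ≠ ∞) (hs : MeasurableSet s)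
    (hf : MemLp f p μ) (hg : MemLp g p μ) (hgs : g =ᵐ[μ.restrict sᶜ] 0) :
    lpNorm (f + g) p μ ^ p.toReal + lpNorm (f - g) p μ ^ p.toReal ≤
      hannerSum p.toReal (lpNorm f p (μ.restrict s)) (lpNorm g p μ) +
        2 * lpNorm f p μ ^ p.toReal := by
  have hp0 : p ≠ 0 := (zero_lt_two.trans_le hp2).ne'
  have hadd : lpNorm (f + g) p (μ.restrict sᶜ) = lpNorm f p (μ.restrict sᶜ) :=
    lpNorm_congr_ae (by filter_upwards [hgs] with x hx; simp [hx])
  have hsub : lpNorm (f - g) p (μ.restrict sᶜ) = lpNorm f p (μ.restrict sᶜ) :=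
    lpNorm_congr_ae (by filter_upwards [hgs] with x hx; simp [hx])
  have hcompl : lpNorm f p (μ.restrict sᶜ) ^ p.toReal ≤ lpNorm f p μ ^ p.toReal :=
    Real.rpow_le_rpow lpNorm_nonneg (lpNorm_restrict_le hp0 hp hs.compl hf) (by positivity)
  have hgnorm : lpNorm g p (μ.restrict s) = lpNorm g p μ := by
    have hsplit := lpNorm_rpow_restrict_add_compl hp0 hp hs hg
    rwa [lpNorm_congr_ae hgs, lpNorm_zero, Real.zero_rpow (ENNReal.toReal_pos hp0 hp).ne', add_zero,
      Real.rpow_left_inj lpNorm_nonneg lpNorm_nonneg (ENNReal.toReal_pos hp0 hp).ne'] at hsplit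
  have hhanner := hanner_inequality hp2 hp (hf.restrict s) (hg.restrict s)
  rw [← lpNorm_rpow_restrict_add_compl hp0 hp hs (hf.add hg),
    ← lpNorm_rpow_restrict_add_compl hp0 hp hs (hf.sub hg), hadd, hsub]
  rw [hgnorm] at hhanner
  linarith

end Hanner

end LpNorm

/-- The covering radius of the net `± g i` formed by `n` disjointly supported unit vectors of an
`L_q` space, as given by Hanner's inequality. -/
noncomputable def netRadius (q : ℝ) (n : ℕ) : ℝ :=
  ((1 / 2) * ((1 + ((n : ℝ) ^ (1 / q))⁻¹) ^ q + (1 - ((n : ℝ) ^ (1 / q))⁻¹) ^ q) + 1) ^ (1 / q)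

section DisjointNet

lemma exists_setIntegral_le_div_card {α ι : Type*} [MeasurableSpace α] {μ : Measure α} [Fintype ι]
    [Nonempty ι] {s : ι → Set α} {g : α → ℝ} (hs : ∀ i, NullMeasurableSet (s i) μ)
    (hd : Pairwise (AEDisjoint μ on s)) (hg : Integrable g μ) (hg0 : 0 ≤ᵐ[μ] g) :
    ∃ i, ∫ x in s i, g x ∂μ ≤ (∫ x, g x ∂μ) / Fintype.card ι := by
  have hcard : (Fintype.card ι : ℝ) ≠ 0 := Nat.cast_ne_zero.2 Fintype.card_ne_zero
  have hsum : ∑ i, ∫ x in s i, g x ∂μ ≤ ∑ _i : ι, (∫ x, g x ∂μ) / Fintype.card ι :=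
    calc ∑ i, ∫ x in s i, g x ∂μ = ∫ x in ⋃ i, s i, g x ∂μ := by
          rw [integral_iUnion_ae hs hd hg.integrableOn, tsum_fintype]
      _ ≤ ∫ x, g x ∂μ := setIntegral_le_integral hg hg0
      _ = ∑ _i : ι, (∫ x, g x ∂μ) / Fintype.card ι := by
          rw [Finset.sum_const, Finset.card_univ, nsmul_eq_mul, mul_div_cancel₀ _ hcard]
  obtain ⟨i, -, hi⟩ := Finset.exists_le_of_sum_le Finset.univ_nonempty hsum
  exact ⟨i, hi⟩

variable {α ι E : Type*} [MeasurableSpace α] {μ : Measure α} [Fintype ι] [Nonempty ι]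
  [NormedAddCommGroup E] {p : ℝ≥0∞} {s : ι → Set α}

lemma exists_lpNorm_restrict_le_card_inv (hp0 : p ≠ 0) (hp : p ≠ ∞)
    (hs : ∀ i, NullMeasurableSet (s i) μ) (hd : Pairwise (AEDisjoint μ on s)) {f : α → E}
    (hf : MemLp f p μ) (hf1 : lpNorm f p μ ≤ 1) :
    ∃ i, lpNorm f p (μ.restrict (s i)) ≤ ((Fintype.card ι : ℝ) ^ (1 / p.toReal))⁻¹ := by
  have hq : 0 < p.toReal := ENNReal.toReal_pos hp0 hp
  obtain ⟨i, hi⟩ := exists_setIntegral_le_div_card hs hd (hf.integrable_norm_rpow hp0 hp)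
    (.of_forall fun x => by positivity)
  refine ⟨i, ?_⟩
  rw [← lpNorm_rpow_toReal hp0 hp hf.1, ← lpNorm_rpow_toReal hp0 hp hf.1.restrict] at hi
  rw [← Real.inv_rpow (Nat.cast_nonneg _), one_div,
    Real.le_rpow_inv_iff_of_pos lpNorm_nonneg (by positivity) hq, ← one_div]
  exact hi.trans (by gcongr; exact Real.rpow_le_one lpNorm_nonneg hf1 hq.le)

lemma norm_eq_lpNorm (f : Lp E p μ) : ‖f‖ = lpNorm f p μ := by
  rw [Lp.norm_def, toReal_eLpNorm (Lp.aestronglyMeasurable f)]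

theorem exists_min_norm_sub_norm_add_le [InnerProductSpace ℝ E] (hp2 : 2 ≤ p) (hp : p ≠ ∞)
    (hs : ∀ i, MeasurableSet (s i)) (hd : Pairwise (AEDisjoint μ on s)) {g : ι → Lp E p μ}
    (hg1 : ∀ i, ‖g i‖ = 1) (hgs : ∀ i, g i =ᵐ[μ.restrict (s i)ᶜ] 0) {f : Lp E p μ} (hf : ‖f‖ ≤ 1) :
    ∃ i, min ‖f - g i‖ ‖f + g i‖ ≤
      netRadius p.toReal (Fintype.card ι) := by
  have hp0 : p ≠ 0 := (zero_lt_two.trans_le hp2).ne'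
  have hq := two_le_toReal hp2 hp
  have hfm := Lp.memLp f
  rw [norm_eq_lpNorm] at hf
  obtain ⟨i, hi⟩ := exists_lpNorm_restrict_le_card_inv hp0 hp
    (fun i => (hs i).nullMeasurableSet) hd hfm hf
  refine ⟨i, ?_⟩
  set r := ((Fintype.card ι : ℝ) ^ (1 / p.toReal))⁻¹
  have hr1 : r ≤ 1 := inv_le_one_of_one_le₀
    (Real.one_le_rpow (Nat.one_le_cast.2 Fintype.card_pos) (by positivity))
  have hlocal := lpNorm_rpow_add_le_of_ae_eq_zero_compl hp2 hp (hs i) hfm (Lp.memLp (g i)) (hgs i)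
  have hmono : hannerSum p.toReal (lpNorm f p (μ.restrict (s i))) 1 ≤
      (1 + r) ^ p.toReal + (1 - r) ^ p.toReal :=
    calc hannerSum p.toReal (lpNorm f p (μ.restrict (s i))) 1
      _ ≤ hannerSum p.toReal r 1 :=
        hannerSum_monotoneOn hq zero_le_one lpNorm_nonneg (lpNorm_nonneg.trans hi) hi
      _ = (1 + r) ^ p.toReal + (1 - r) ^ p.toReal := by
        rw [hannerSum, abs_sub_comm, abs_of_nonneg (sub_nonneg.2 hr1), add_comm r 1]
  have hf1 : lpNorm f p μ ^ p.toReal ≤ 1 := Real.rpow_le_one lpNorm_nonneg hf (by positivity)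
  rw [← norm_eq_lpNorm (g i), hg1 i] at hlocal
  rw [norm_eq_lpNorm, norm_eq_lpNorm, lpNorm_congr_ae (Lp.coeFn_sub f (g i)),
    lpNorm_congr_ae (Lp.coeFn_add f (g i))]
  refine min_le_rpow_of_rpow_add_rpow_le (by linarith) lpNorm_nonneg lpNorm_nonneg ?_
  linarith

end DisjointNet

section Thickness

lemma thickness_le_of_signed_net {X ι : Type*} [NormedAddCommGroup X] [Finite ι] {g : ι → X}
    (hg1 : ∀ i, ‖g i‖ = 1) {ε : ℝ}
    (hnet : ∀ y : X, ‖y‖ ≤ 1 → ∃ i, min ‖y - g i‖ ‖y + g i‖ ≤ ε) : thickness X ≤ ε := by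
  have hε : 0 < ε := by
    obtain ⟨i, hi⟩ := hnet 0 (by simp)
    rw [zero_sub, norm_neg, zero_add, hg1 i, min_self] at hi
    exact one_pos.trans_le hi
  have hfin : (range g ∪ range (-g)).Finite := (finite_range g).union (finite_range (-g))
  refine csInf_le ⟨0, fun δ hδ => hδ.1.le⟩ ⟨hε, hfin.toFinset, fun x hx => ?_, fun y hy => ?_⟩
  · rcases hfin.mem_toFinset.1 hx with ⟨i, rfl⟩ | ⟨i, rfl⟩
    · exact hg1 i
    · rw [Pi.neg_apply, norm_neg, hg1 i]
  · obtain ⟨i, hi⟩ := hnet y hy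
    rcases min_le_iff.1 hi with h | h
    · exact ⟨g i, hfin.mem_toFinset.2 (.inl ⟨i, rfl⟩), h⟩
    · exact ⟨-g i, hfin.mem_toFinset.2 (.inr ⟨i, rfl⟩), by rwa [sub_neg_eq_add]⟩

lemma tendsto_netRadius {q : ℝ} (hq : 0 < q) :
    Tendsto (netRadius q) atTop (𝓝 (2 ^ (1 / q))) := by
  have hr : Tendsto (fun n : ℕ => ((n : ℝ) ^ (1 / q))⁻¹) atTop (𝓝 0) :=
    ((tendsto_rpow_atTop (by positivity)).comp tendsto_natCast_atTop_atTop).inv_tendsto_atTop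
  have hadd := (hr.const_add 1).rpow_const (p := q) (.inr hq.le)
  have hsub := (hr.const_sub 1).rpow_const (p := q) (.inr hq.le)
  have hlim := (((hadd.add hsub).const_mul (1 / 2)).add_const 1).rpow_const (p := 1 / q)
    (.inr (by positivity))
  have hval : (2 : ℝ) = 1 / 2 * ((1 + 0) ^ q + (1 - 0) ^ q) + 1 := by
    rw [add_zero, sub_zero, Real.one_rpow]
    norm_num
  rwa [← hval] at hlim

end Thickness

section StepFunctions

/-- The interval `[i/n, (i+1)/n]` supporting `stepFn p n i`. -/
def stepInterval (n i : ℕ) : Set ℝ :=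
  Icc ((i : ℝ) / n) (((i : ℝ) + 1) / n)

lemma measurableSet_stepInterval (n i : ℕ) : MeasurableSet (stepInterval n i) :=
  measurableSet_Icc

lemma stepInterval_subset_Icc {n i : ℕ} (hi : i < n) : stepInterval n i ⊆ Icc 0 1 := by
  have hn : (0 : ℝ) < n := Nat.cast_pos.2 (Nat.zero_lt_of_lt hi)
  refine Icc_subset_Icc (by positivity) ((div_le_one hn).2 ?_)
  exact_mod_cast hi

lemma measureReal_stepInterval {n i : ℕ} (hi : i < n) :
    (volume.restrict (Icc (0 : ℝ) 1)).real (stepInterval n i) = 1 / n := by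
  rw [measureReal_restrict_apply (measurableSet_stepInterval n i),
    inter_eq_left.2 (stepInterval_subset_Icc hi), stepInterval,
    Real.volume_real_Icc_of_le (by gcongr; linarith)]
  ring

lemma pairwise_aedisjoint_stepInterval (n : ℕ) :
    Pairwise (AEDisjoint volume on stepInterval n) := fun i j hij => by
  have hmono : Monotone fun k : ℕ => (k : ℝ) / n := fun _ _ hab =>
    div_le_div_of_nonneg_right (Nat.cast_le.2 hab) n.cast_nonneg
  have hIoc := (hmono.pairwise_disjoint_on_Ioc_succ hij).aedisjoint (μ := volume)
  simp only [Order.succ_eq_add_one, Nat.cast_add, Nat.cast_one] at hIoc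
  exact hIoc.congr Ioc_ae_eq_Icc.symm Ioc_ae_eq_Icc.symm

lemma pairwise_aedisjoint_stepInterval_of_absolutelyContinuous (n : ℕ) {μ : Measure ℝ}
    (hμ : μ ≪ volume) :
    Pairwise (AEDisjoint μ on fun i : Fin n => stepInterval n i) := fun _ _ hij =>
  hμ (pairwise_aedisjoint_stepInterval n (Fin.val_injective.ne hij))

variable {p : ℝ≥0∞} {n : ℕ}

lemma norm_stepFn (hp0 : p ≠ 0) (hp : p ≠ ∞) (i : Fin n) : ‖stepFn p n i‖ = 1 := by
  have hn : (0 : ℝ) < n := Nat.cast_pos.2 i.pos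
  rw [stepFn, norm_indicatorConstLp hp0 hp, ← stepInterval, measureReal_stepInterval i.2,
    Real.norm_of_nonneg (by positivity), ← Real.mul_rpow (by positivity) (by positivity),
    mul_one_div_cancel hn.ne', Real.one_rpow]

lemma stepFn_ae_eq_zero (p : ℝ≥0∞) (i : Fin n) :
    stepFn p n i =ᵐ[(volume.restrict (Icc (0 : ℝ) 1)).restrict (stepInterval n i)ᶜ] 0 := by
  rw [EventuallyEq, ae_restrict_iff' (measurableSet_stepInterval n i).compl]
  filter_upwards [indicatorConstLp_coeFn (p := p) (hs := measurableSet_stepInterval n i)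
    (hμs := measure_ne_top (volume.restrict (Icc (0 : ℝ) 1)) _)
    (c := (n : ℝ) ^ (1 / p.toReal))] with x hx hxs
  exact hx.trans (indicator_of_notMem hxs _)

lemma exists_min_norm_sub_stepFn_le (hp2 : 2 ≤ p) (hp : p ≠ ∞) (hn : 1 ≤ n)
    {f : Lp ℝ p (volume.restrict (Icc (0 : ℝ) 1))} (hf : ‖f‖ ≤ 1) :
    ∃ i : Fin n, min ‖f - stepFn p n i‖ ‖f + stepFn p n i‖ ≤
      netRadius p.toReal n := by
  have : Nonempty (Fin n) := ⟨⟨0, hn⟩⟩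
  have hp0 : p ≠ 0 := (zero_lt_two.trans_le hp2).ne'
  simpa only [Fintype.card_fin] using exists_min_norm_sub_norm_add_le hp2 hp
    (fun i : Fin n => measurableSet_stepInterval n i)
    (pairwise_aedisjoint_stepInterval_of_absolutelyContinuous n
      Measure.restrict_le_self.absolutelyContinuous)
    (norm_stepFn hp0 hp) (stepFn_ae_eq_zero p) hf

end StepFunctions

/-- for `2 ≤ p < ∞` the `2n` functions `±f_i` give the stated covering estimate
on the unit sphere of `L_p[0,1]`; consequently `T(L_p[0,1]) ≤ 2^{1/p}`. -/
theorem step_net_estimate_and_thickness_Lp_le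
    (p : ℝ≥0∞) [Fact (1 ≤ p)] (hp2 : 2 ≤ p) (hp : p ≠ ⊤) (n : ℕ) (hn : 1 ≤ n) :
    (∀ i, ‖stepFn p n i‖ = 1) ∧
    (∀ f : Lp ℝ p (volume.restrict (Set.Icc (0:ℝ) 1)), ‖f‖ = 1 →
      ∃ i : Fin n, min ‖f - stepFn p n i‖ ‖f + stepFn p n i‖ ≤
        ((1 / 2) * ((1 + ((n : ℝ) ^ (1 / p.toReal))⁻¹) ^ p.toReal
            + (1 - ((n : ℝ) ^ (1 / p.toReal))⁻¹) ^ p.toReal) + 1) ^ (1 / p.toReal)) ∧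
    thickness (Lp ℝ p (volume.restrict (Set.Icc (0:ℝ) 1))) ≤ 2 ^ (1 / p.toReal) := by
  have hp0 : p ≠ 0 := (zero_lt_two.trans_le hp2).ne'
  refine ⟨norm_stepFn hp0 hp, fun f hf => exists_min_norm_sub_stepFn_le hp2 hp hn hf.le, ?_⟩
  refine ge_of_tendsto (tendsto_netRadius (ENNReal.toReal_pos hp0 hp)) ?_
  filter_upwards [eventually_ge_atTop 1] with m hm
  exact thickness_le_of_signed_net (norm_stepFn hp0 hp) fun f hf =>
    exists_min_norm_sub_stepFn_le hp2 hp hm hf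
end
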